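/- arXiv:2512.00584 — 2 statements merged into one kernel-verified Lean document; each statement's English description precedes it below -/
import Mathlib

section
/- Let K be an algebraically closed field, S = K[X_0,…,X_n], < a monomial order with X_0 > ⋯ > X_n, and I ⊆ S a homogeneous ideal with in_<(I) = I_Δ the Stanley–Reisner ideal of a graph Δ on {0,…,n} having every i as a vertex. Assume X = V(I) ⊆ P^n is a connected projective curve. Then the point P_0 = [1:0:⋯:0] ∈ X is a nonsingular point of X if and only if 0 is a free vertex of the graph Δ. -/
open MvPolynomial

/-- The leading exponent (multidegree) of a multivariate polynomial with respect to a
monomial order: the maximum of its support. (It is `0` for the zero polynomial.) -/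
noncomputable def MonomialOrder.mdeg {σ : Type*} (m : MonomialOrder σ) {R : Type*}
    [CommSemiring R] (f : MvPolynomial σ R) : σ →₀ ℕ :=
  m.toSyn.symm (f.support.sup fun e => m.toSyn e)

/-- The initial ideal of an ideal `I` with respect to a monomial order. -/
noncomputable def initialIdeal {σ : Type*} {K : Type*} [Field K] (m : MonomialOrder σ)
    (I : Ideal (MvPolynomial σ K)) : Ideal (MvPolynomial σ K) :=
  Ideal.span {g | ∃ f ∈ I, f ≠ 0 ∧ g = monomial (m.mdeg f) (1 : K)}

/-- A monomial order on `X_0, …, X_n` satisfies `X_0 > X_1 > ⋯ > X_n`. -/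
def MonomialOrder.Descending {n : ℕ} (m : MonomialOrder (Fin (n + 1))) : Prop :=
  ∀ i j : Fin (n + 1), i < j →
    m.toSyn (Finsupp.single j 1) < m.toSyn (Finsupp.single i 1)

/-- An ideal is homogeneous (w.r.t. the standard grading) iff it contains all homogeneous
components of its elements. -/
def IsHomog {σ : Type*} {K : Type*} [Field K] (I : Ideal (MvPolynomial σ K)) : Prop :=
  ∀ f ∈ I, ∀ d : ℕ, homogeneousComponent d f ∈ I

/-- An abstract simplicial complex on the vertex set `{0, …, n}`. -/
structure SComplex (n : ℕ) where
  faces : Set (Finset (Fin (n + 1)))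
  down_closed : ∀ {s t : Finset (Fin (n + 1))}, s ∈ faces → t ⊆ s → t ∈ faces

/-- A simplicial complex is 1-dimensional (a graph) if all faces have at most 2 vertices and
some face has exactly 2 vertices. -/
def SComplex.IsGraph {n : ℕ} (Δ : SComplex n) : Prop :=
  (∀ s ∈ Δ.faces, s.card ≤ 2) ∧ ∃ s ∈ Δ.faces, s.card = 2

/-- The Stanley–Reisner ideal of a simplicial complex. -/
noncomputable def SComplex.srIdeal {n : ℕ} (K : Type*) [Field K] (Δ : SComplex n) :
    Ideal (MvPolynomial (Fin (n + 1)) K) :=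
  Ideal.span {g | ∃ s : Finset (Fin (n + 1)), s ∉ Δ.faces ∧ g = ∏ i ∈ s, X i}

/-- A vertex of a graph is free if it belongs to exactly one edge. -/
def SComplex.FreeVertex {n : ℕ} (Δ : SComplex n) (v : Fin (n + 1)) : Prop :=
  ∃! e : Finset (Fin (n + 1)), e ∈ Δ.faces ∧ e.card = 2 ∧ v ∈ e

/-- The (vector representatives of the) points of the projective variety `V(I) ⊆ ℙⁿ`. -/
def projZeros {n : ℕ} {K : Type*} [Field K] (I : Ideal (MvPolynomial (Fin (n + 1)) K)) :
    Set (Fin (n + 1) → K) :=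
  {x | x ≠ 0 ∧ ∀ f ∈ I, eval x f = 0}

/-- The rank at the point `x` of the Jacobian matrix of the ideal `I`. -/
noncomputable def jacobianRank {n : ℕ} {K : Type*} [Field K]
    (I : Ideal (MvPolynomial (Fin (n + 1)) K)) (x : Fin (n + 1) → K) : ℕ :=
  Module.finrank K
    (Submodule.span K {v : Fin (n + 1) → K | ∃ f ∈ I, v = fun i => eval x (pderiv i f)})

/-- The projective variety `V(I)` is connected. -/
def IsConnectedProjVariety {n : ℕ} {K : Type*} [Field K]
    (I : Ideal (MvPolynomial (Fin (n + 1)) K)) : Prop :=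
  (projZeros I).Nonempty ∧
    ∀ J₁ J₂ : Ideal (MvPolynomial (Fin (n + 1)) K), IsHomog J₁ → IsHomog J₂ →
      projZeros I ⊆ projZeros J₁ ∪ projZeros J₂ →
      projZeros I ∩ (projZeros J₁ ∩ projZeros J₂) = ∅ →
      projZeros I ⊆ projZeros J₁ ∨ projZeros I ⊆ projZeros J₂

/-!
Write `𝔭 = (X_j : j ≠ v)` for the prime of the coordinate point `P_v` and `𝒪` for the localization
of `S ⧸ I` at `𝔭`. Since `X_v` is the largest variable, a homogeneous `U ∉ 𝔭` of degree `d` has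
leading monomial `X_v ^ d`. Hence, when all monomials `X_v ^ k * X ^ u` are standard, `X ^ u` is
nonzero in `𝒪`, and two such monomials `X ^ u`, `X ^ w` that do not differ by powers of `X_v` are
not associated in `𝒪`.

Every `i ≠ v` that is not a neighbor of `v` contributes a quadric in `I` with leading monomial
`X_v * X_i`; the gradients of these quadrics at `P_v` form a triangular system, so the Jacobian rank
is at least `n` minus the number of neighbors of `v`. Conversely, a vector in the row space of the
Jacobian is a linear form lying in the square of the maximal ideal of `𝒪`. If the rank were `n`, the
maximal ideal would vanish by Nakayama, whereas `X_a ≠ 0` in `𝒪` for a neighbor `a`. If the rank is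
at least `n - 1`, the maximal ideal is principal, so for two neighbors `a`, `b` some positive powers
of `X_a` and `X_b` are associated in `𝒪`, which forces `a = b`.
-/

open scoped MonomialOrder

theorem monomial_one_mem_span_monomial_image_iff {σ K : Type*} [Field K] {s : Set (σ →₀ ℕ)}
    {e : σ →₀ ℕ} :
    monomial e (1 : K) ∈ Ideal.span ((fun d => monomial d (1 : K)) '' s) ↔ ∃ d ∈ s, d ≤ e := by
  classical
  simp [mem_ideal_span_monomial_image, support_monomial, -mem_support_iff]

section InitialIdeal

variable {σ K : Type*} [Field K] {m : MonomialOrder σ} {I : Ideal (MvPolynomial σ K)}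

theorem monomial_degree_mem_initialIdeal {f : MvPolynomial σ K} (hf : f ∈ I) (hf0 : f ≠ 0) :
    monomial (m.degree f) (1 : K) ∈ initialIdeal m I :=
  Ideal.subset_span ⟨f, hf, hf0, rfl⟩

theorem monomial_mem_initialIdeal_iff {e : σ →₀ ℕ} :
    monomial e (1 : K) ∈ initialIdeal m I ↔ ∃ f ∈ I, f ≠ 0 ∧ m.degree f ≤ e := by
  have himage : {g | ∃ f ∈ I, f ≠ 0 ∧ g = monomial (m.mdeg f) (1 : K)} =
      (fun d => monomial d 1) '' {d | ∃ f ∈ I, f ≠ 0 ∧ m.degree f = d} := by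
    ext g
    constructor
    · rintro ⟨f, hf, hf0, rfl⟩
      exact ⟨_, ⟨f, hf, hf0, rfl⟩, rfl⟩
    · rintro ⟨_, ⟨f, hf, hf0, rfl⟩, rfl⟩
      exact ⟨f, hf, hf0, rfl⟩
  rw [initialIdeal, himage, monomial_one_mem_span_monomial_image_iff]
  simp [and_assoc]

theorem exists_isHomogeneous_degree_eq (hI : IsHomog I) {e : σ →₀ ℕ}
    (he : monomial e (1 : K) ∈ initialIdeal m I) :
    ∃ f ∈ I, f.IsHomogeneous e.degree ∧ f ≠ 0 ∧ m.degree f = e := by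
  classical
  obtain ⟨f, hf, hf0, hfe⟩ := monomial_mem_initialIdeal_iff.1 he
  have hmon : monomial (e - m.degree f) (1 : K) ≠ 0 := by simp
  set g := monomial (e - m.degree f) (1 : K) * f
  have hg : m.degree g = e := by
    rw [m.degree_mul hmon hf0, m.degree_monomial, if_neg one_ne_zero, tsub_add_cancel_of_le hfe]
  have hcoeff : coeff e (homogeneousComponent e.degree g) ≠ 0 := by
    rw [coeff_homogeneousComponent, if_pos rfl, ← hg]
    exact m.coeff_degree_ne_zero_iff.2 (mul_ne_zero hmon hf0)
  refine ⟨homogeneousComponent e.degree g, hI _ (I.mul_mem_left _ hf) _,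
    homogeneousComponent_isHomogeneous _ _, fun h => hcoeff (by rw [h, coeff_zero]), ?_⟩
  refine m.toSyn.injective (le_antisymm ?_ (m.le_degree (mem_support_iff.2 hcoeff)))
  refine m.degree_le_iff.2 fun d hd => hg ▸ m.le_degree (mem_support_iff.2 fun h => ?_)
  rw [mem_support_iff, coeff_homogeneousComponent, h, ite_self] at hd
  exact hd rfl

theorem sub_notMem_of_degree_ne {f g : MvPolynomial σ K}
    (hf : monomial (m.degree f) (1 : K) ∉ initialIdeal m I)
    (hg : monomial (m.degree g) (1 : K) ∉ initialIdeal m I)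
    (hfg : m.degree f ≠ m.degree g) : f - g ∉ I := by
  intro hmem
  have hne : f - g ≠ 0 := fun h => hfg (by rw [sub_eq_zero.1 h])
  rcases lt_or_gt_of_ne (m.toSyn.injective.ne hfg) with hlt | hlt
  · refine hg ?_
    rw [← m.degree_sub_of_lt hlt, ← neg_sub f g, m.degree_neg]
    exact monomial_degree_mem_initialIdeal hmem hne
  · refine hf ?_
    rw [← m.degree_sub_of_lt hlt]
    exact monomial_degree_mem_initialIdeal hmem hne

end InitialIdeal

theorem homogeneousComponent_mul_monomial {σ R : Type*} [CommSemiring R] (N : ℕ)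
    (f : MvPolynomial σ R) (u : σ →₀ ℕ) (c : R) :
    homogeneousComponent N (f * monomial u c) =
      (if u.degree ≤ N then homogeneousComponent (N - u.degree) f else 0) * monomial u c := by
  classical
  ext e
  rw [coeff_homogeneousComponent, coeff_mul_monomial', coeff_mul_monomial']
  by_cases hue : u ≤ e
  · obtain ⟨d, rfl⟩ := exists_add_of_le hue
    simp only [hue, if_true, map_add, add_tsub_cancel_left]
    split_ifs with h1 h2 h2
    · rw [coeff_homogeneousComponent, if_pos (by omega)]
    · omega
    · rw [coeff_homogeneousComponent, if_neg (by omega), zero_mul]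
    · simp
  · simp [hue]

/-- `X v` is the largest variable for the monomial order `m`. -/
def IsTopVariable {σ : Type*} (m : MonomialOrder σ) (v : σ) : Prop :=
  ∀ j, Finsupp.single j 1 ≼[m] Finsupp.single v 1

theorem isTopVariable_zero_of_descending {n : ℕ} {m : MonomialOrder (Fin (n + 1))}
    (hm : m.Descending) : IsTopVariable m 0 := fun j => by
  rcases eq_or_ne j 0 with rfl | hj
  · exact le_rfl
  · exact (hm 0 j (Fin.pos_of_ne_zero hj)).le

theorem IsTopVariable.le_single_degree {σ : Type*} {m : MonomialOrder σ} {v : σ}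
    (hv : IsTopVariable m v) (e : σ →₀ ℕ) : e ≼[m] Finsupp.single v e.degree := by
  induction e using Finsupp.induction_linear with
  | zero => simp
  | add f g hf hg =>
    rw [map_add Finsupp.degree, Finsupp.single_add, map_add, map_add]
    exact add_le_add hf hg
  | single j k =>
    rw [Finsupp.degree_single, ← mul_one k, ← smul_eq_mul, ← Finsupp.smul_single,
      ← Finsupp.smul_single, map_nsmul, map_nsmul]
    exact nsmul_le_nsmul_right (hv j) k

namespace SComplex

variable {n : ℕ} {Δ : SComplex n} {v a : Fin (n + 1)}

theorem IsGraph.ne_zero (hΔ : Δ.IsGraph) : n ≠ 0 := by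
  obtain ⟨-, s, -, hs⟩ := hΔ
  have := s.card_le_univ
  rw [hs, Fintype.card_fin] at this
  omega

theorem monomial_mem_srIdeal_iff {K : Type*} [Field K] {e : Fin (n + 1) →₀ ℕ} :
    monomial e (1 : K) ∈ Δ.srIdeal K ↔ e.support ∉ Δ.faces := by
  have himage : {g | ∃ s : Finset (Fin (n + 1)), s ∉ Δ.faces ∧ g = ∏ i ∈ s, X i} =
      (fun d => monomial d (1 : K)) '' ((fun s => ∑ i ∈ s, Finsupp.single i 1) '' Δ.facesᶜ) := by
    ext g
    simp [X, monomial_sum_one, eq_comm (a := g)]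
  have hle (s : Finset (Fin (n + 1))) : ∑ i ∈ s, Finsupp.single i 1 ≤ e ↔ s ⊆ e.support := by
    refine Finsupp.le_def.trans (forall_congr' fun i => ?_)
    by_cases hi : i ∈ s <;>
      simp [hi, Finsupp.finsetSum_apply, Finsupp.single_apply, Nat.one_le_iff_ne_zero]
  rw [srIdeal, himage, monomial_one_mem_span_monomial_image_iff]
  simp only [Set.exists_mem_image, Set.mem_compl_iff, hle]
  exact ⟨fun ⟨s, hs, hse⟩ he => hs (Δ.down_closed he hse), fun he => ⟨_, he, subset_rfl⟩⟩

/-- The vertices joined to `v` by an edge of `Δ`. -/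
noncomputable def neighbors (Δ : SComplex n) (v : Fin (n + 1)) : Finset (Fin (n + 1)) :=
  open scoped Classical in {a | a ≠ v ∧ {v, a} ∈ Δ.faces}

theorem mem_neighbors : a ∈ Δ.neighbors v ↔ a ≠ v ∧ {v, a} ∈ Δ.faces := by
  simp [neighbors]

theorem freeVertex_iff_card_neighbors : Δ.FreeVertex v ↔ (Δ.neighbors v).card = 1 := by
  have hedge (e : Finset (Fin (n + 1))) :
      e.card = 2 ∧ v ∈ e ↔ ∃ a, a ≠ v ∧ e = {v, a} := by
    constructor
    · rintro ⟨hcard, hv⟩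
      obtain ⟨a, ha⟩ := Finset.card_eq_one.1
        (show (e.erase v).card = 1 by rw [Finset.card_erase_of_mem hv, hcard])
      exact ⟨a, Finset.ne_of_mem_erase (ha ▸ Finset.mem_singleton_self a),
        by rw [← Finset.insert_erase hv, ha]⟩
    · rintro ⟨a, ha, rfl⟩
      exact ⟨Finset.card_pair ha.symm, Finset.mem_insert_self _ _⟩
  have hpair {a b : Fin (n + 1)} (hb : b ≠ v) (h : ({v, b} : Finset (Fin (n + 1))) = {v, a}) :
      b = a := by
    have : b ∈ ({v, a} : Finset (Fin (n + 1))) := h ▸ by simp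
    simpa [hb] using this
  simp only [FreeVertex, hedge, Finset.card_eq_one, Finset.eq_singleton_iff_unique_mem,
    mem_neighbors]
  constructor
  · rintro ⟨_, ⟨hface, a, ha, rfl⟩, huniq⟩
    exact ⟨a, ⟨ha, hface⟩, fun b hb => hpair hb.1 (huniq _ ⟨hb.2, b, hb.1, rfl⟩)⟩
  · rintro ⟨a, ⟨ha, hface⟩, huniq⟩
    refine ⟨{v, a}, ⟨hface, a, ha, rfl⟩, ?_⟩
    rintro _ ⟨hb, b, hbv, rfl⟩
    rw [huniq b ⟨hbv, hb⟩]

end SComplex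

section CoordPrime

variable {σ R : Type*} [CommRing R] {v : σ} {f g : MvPolynomial σ R} {k : ℕ}

/-- The ideal `(X j : j ≠ v)` of the coordinate point `P_v = [0 : ⋯ : 1 : ⋯ : 0]`. -/
noncomputable def coordPrime (R : Type*) [CommRing R] (v : σ) : Ideal (MvPolynomial σ R) :=
  Ideal.span (X '' {v}ᶜ)

theorem mem_coordPrime_iff : f ∈ coordPrime R v ↔ ∀ k, coeff (Finsupp.single v k) f = 0 := by
  rw [coordPrime, mem_ideal_span_X_image]
  constructor
  · intro h k
    by_contra hk
    obtain ⟨j, hj, hjk⟩ := h _ (mem_support_iff.2 hk)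
    exact hjk (Finsupp.single_eq_of_ne hj)
  · intro h e he
    by_contra! hev
    have hsingle : e = Finsupp.single v (e v) :=
      Finsupp.support_subset_singleton.1 fun j hj => by
        by_contra hjv
        exact Finsupp.mem_support_iff.1 hj (hev j (by simpa using hjv))
    exact mem_support_iff.1 he (hsingle ▸ h (e v))

theorem X_mem_coordPrime {j : σ} (hj : j ≠ v) : X j ∈ coordPrime R v :=
  Ideal.subset_span ⟨j, hj, rfl⟩

theorem X_self_notMem_coordPrime [Nontrivial R] : X v ∉ coordPrime R v := fun h => by
  classical
  simpa [coeff_X] using mem_coordPrime_iff.1 h 1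

instance coordPrime.isPrime [IsDomain R] : (coordPrime R v).IsPrime := by
  classical
  let restrict : MvPolynomial σ R →ₐ[R] Polynomial R := aeval (Pi.single v Polynomial.X)
  let extend : Polynomial R →ₐ[R] MvPolynomial σ R := Polynomial.aeval (X v)
  have hmk : (Ideal.Quotient.mkₐ R (coordPrime R v)).comp (extend.comp restrict) =
      Ideal.Quotient.mkₐ R (coordPrime R v) := by
    refine algHom_ext fun j => ?_
    rcases eq_or_ne j v with rfl | hj
    · simp [restrict, extend]
    · simpa [restrict, extend, hj] using
        (Ideal.Quotient.eq_zero_iff_mem.2 (X_mem_coordPrime hj)).symm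
  have hker : coordPrime R v = RingHom.ker restrict := by
    refine le_antisymm (Ideal.span_le.2 ?_) fun f hf => ?_
    · rintro _ ⟨j, hj : j ≠ v, rfl⟩
      simp [restrict, hj]
    · rw [← Ideal.Quotient.eq_zero_iff_mem]
      simpa [(RingHom.mem_ker).1 hf] using (DFunLike.congr_fun hmk f).symm
  exact hker ▸ RingHom.ker_isPrime restrict

theorem sub_C_coeff_mul_X_pow_mem_coordPrime (hg : g.IsHomogeneous k) :
    g - C (coeff (Finsupp.single v k) g) * X v ^ k ∈ coordPrime R v := by
  classical
  refine mem_coordPrime_iff.2 fun l => ?_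
  rw [coeff_sub, coeff_C_mul, coeff_X_pow]
  rcases eq_or_ne k l with rfl | hkl
  · simp
  · rw [hg.coeff_eq_zero (by simpa using hkl.symm),
      if_neg fun h => hkl (Finsupp.single_injective v h), mul_zero, sub_zero]

theorem eval_single_eq_zero_of_mem_coordPrime [DecidableEq σ] (hf : f ∈ coordPrime R v) :
    eval (Pi.single v 1) f = 0 := by
  suffices coordPrime R v ≤ RingHom.ker (eval (Pi.single v 1)) from this hf
  rw [coordPrime, Ideal.span_le]
  rintro _ ⟨j, hj, rfl⟩
  simpa using Pi.single_eq_of_ne hj 1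

theorem eval_single_of_isHomogeneous [DecidableEq σ] (hg : g.IsHomogeneous k) :
    eval (Pi.single v 1) g = coeff (Finsupp.single v k) g := by
  have h := eval_single_eq_zero_of_mem_coordPrime (sub_C_coeff_mul_X_pow_mem_coordPrime (v := v) hg)
  simpa [sub_eq_zero] using h

theorem exists_homogeneousComponent_notMem_coordPrime (hf : f ∉ coordPrime R v) :
    ∃ d, homogeneousComponent d f ∉ coordPrime R v := by
  by_contra! h
  exact hf (sum_homogeneousComponent f ▸ sum_mem fun d _ => h d)

theorem IsTopVariable.degree_eq_single {m : MonomialOrder σ} (hv : IsTopVariable m v)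
    (hg : g.IsHomogeneous k) (hgv : g ∉ coordPrime R v) : m.degree g = Finsupp.single v k := by
  obtain ⟨l, hl⟩ : ∃ l, coeff (Finsupp.single v l) g ≠ 0 := by
    simpa [mem_coordPrime_iff] using hgv
  have hdegree {e : σ →₀ ℕ} (he : coeff e g ≠ 0) : e.degree = k :=
    not_imp_comm.1 hg.coeff_eq_zero he
  obtain rfl : l = k := by simpa using hdegree hl
  refine m.toSyn.injective (le_antisymm ?_ (m.le_degree (mem_support_iff.2 hl)))
  refine m.degree_le_iff.2 fun e he => ?_
  rw [← hdegree (mem_support_iff.1 he)]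
  exact hv.le_single_degree e

end CoordPrime

section StandardAlong

variable {σ K : Type*} [Field K] {m : MonomialOrder σ} {I : Ideal (MvPolynomial σ K)} {v : σ}
  {u w : σ →₀ ℕ} {U V : MvPolynomial σ K}

/-- All monomials `X_v ^ k * X ^ u` are standard, i.e. lie outside the initial ideal of `I`. -/
def IsStandardAlong (m : MonomialOrder σ) (I : Ideal (MvPolynomial σ K)) (v : σ)
    (u : σ →₀ ℕ) : Prop :=
  ∀ k, monomial (Finsupp.single v k + u) (1 : K) ∉ initialIdeal m I

theorem IsTopVariable.degree_mul_monomial (hv : IsTopVariable m v) {k : ℕ}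
    (hU : U.IsHomogeneous k) (hUv : U ∉ coordPrime K v) :
    m.degree (U * monomial u 1) = Finsupp.single v k + u := by
  classical
  have hU0 : U ≠ 0 := fun h => hUv (h ▸ zero_mem _)
  rw [m.degree_mul hU0 (by simp), hv.degree_eq_single hU hUv, m.degree_monomial,
    if_neg one_ne_zero]

theorem mul_monomial_notMem (hv : IsTopVariable m v) (hI : IsHomog I)
    (hu : IsStandardAlong m I v u) (hU : U ∉ coordPrime K v) : U * monomial u 1 ∉ I := by
  intro hmem
  obtain ⟨d, hd⟩ := exists_homogeneousComponent_notMem_coordPrime hU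
  have hcomp : homogeneousComponent d U * monomial u 1 ∈ I := by
    have := hI _ hmem (d + u.degree)
    rwa [homogeneousComponent_mul_monomial, if_pos le_add_self, add_tsub_cancel_right] at this
  have hne : homogeneousComponent d U * monomial u 1 ≠ 0 :=
    mul_ne_zero (fun h => hd (h ▸ zero_mem _)) (by simp)
  have hin := monomial_degree_mem_initialIdeal (m := m) hcomp hne
  rw [hv.degree_mul_monomial (homogeneousComponent_isHomogeneous d U) hd] at hin
  exact hu d hin

theorem le_coordPrime (hv : IsTopVariable m v) (hI : IsHomog I)
    (hstd : IsStandardAlong m I v 0) : I ≤ coordPrime K v := fun f hf => by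
  by_contra hfv
  exact mul_monomial_notMem hv hI hstd hfv (I.mul_mem_right _ hf)

theorem mul_monomial_sub_mul_monomial_notMem (hv : IsTopVariable m v) (hI : IsHomog I)
    (hu : IsStandardAlong m I v u) (hw : IsStandardAlong m I v w)
    (huw : ∀ k l, Finsupp.single v k + u ≠ Finsupp.single v l + w)
    (hU : U ∉ coordPrime K v) (hV : V ∉ coordPrime K v) :
    U * monomial u 1 - V * monomial w 1 ∉ I := by
  intro hmem
  obtain ⟨d, hd⟩ := exists_homogeneousComponent_notMem_coordPrime hU
  set U' := homogeneousComponent d U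
  obtain ⟨l, V', hV', hcomp⟩ : ∃ l V', V'.IsHomogeneous l ∧
      U' * monomial u 1 - V' * monomial w 1 ∈ I := by
    have := hI _ hmem (d + u.degree)
    rw [map_sub, homogeneousComponent_mul_monomial, homogeneousComponent_mul_monomial,
      if_pos le_add_self, add_tsub_cancel_right] at this
    refine ⟨d + u.degree - w.degree, _, ?_, this⟩
    split_ifs
    exacts [homogeneousComponent_isHomogeneous _ _, isHomogeneous_zero _ _ _]
  by_cases hV'v : V' ∈ coordPrime K v
  -- eliminating `X ^ w` leaves a multiple of `X ^ u` with cofactor outside `coordPrime K v`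
  · have hcofactor : U' * V - V' * U ∉ coordPrime K v := fun h =>
      (coordPrime.isPrime.mul_mem_iff_mem_or_mem.not.2 (not_or.2 ⟨hd, hV⟩))
        ((Submodule.sub_mem_iff_left _ (Ideal.mul_mem_right _ _ hV'v)).1 h)
    refine mul_monomial_notMem hv hI hu hcofactor ?_
    have := I.sub_mem (I.mul_mem_left V hcomp) (I.mul_mem_left V' hmem)
    convert this using 1
    ring
  · have hdegU := hv.degree_mul_monomial (u := u) (homogeneousComponent_isHomogeneous d U) hd
    have hdegV := hv.degree_mul_monomial (u := w) hV' hV'v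
    refine sub_notMem_of_degree_ne (m := m) ?_ ?_ ?_ hcomp
    · exact hdegU ▸ hu d
    · exact hdegV ▸ hw l
    · exact hdegU ▸ hdegV ▸ huw d l

end StandardAlong

theorem isStandardAlong_of_mem_faces {K : Type*} [Field K] {n : ℕ} {Δ : SComplex n}
    {m : MonomialOrder (Fin (n + 1))} {I : Ideal (MvPolynomial (Fin (n + 1)) K)}
    (hin : initialIdeal m I = Δ.srIdeal K) {v : Fin (n + 1)} {u : Fin (n + 1) →₀ ℕ}
    (hface : insert v u.support ∈ Δ.faces) : IsStandardAlong m I v u := fun k => by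
  rw [hin, SComplex.monomial_mem_srIdeal_iff, not_not]
  refine Δ.down_closed hface (Finsupp.support_add.trans ?_)
  rw [Finset.insert_eq]
  exact Finset.union_subset_union_left Finsupp.support_single_subset

section LocalRingAt

variable {S : Type*} [CommRing S] {I 𝔭 : Ideal S} [𝔭.IsPrime]

/-- The localization of `S ⧸ I` at the prime `𝔭`, in the form `S_𝔭 ⧸ I S_𝔭`. -/
abbrev LocalRingAt (I 𝔭 : Ideal S) [𝔭.IsPrime] : Type _ :=
  Localization.AtPrime 𝔭 ⧸ I.map (algebraMap S (Localization.AtPrime 𝔭))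

theorem LocalRingAt.algebraMap_eq_zero_iff {f : S} :
    algebraMap S (LocalRingAt I 𝔭) f = 0 ↔ ∃ U ∉ 𝔭, U * f ∈ I := by
  rw [IsScalarTower.algebraMap_apply S (Localization.AtPrime 𝔭), Ideal.Quotient.algebraMap_eq,
    Ideal.Quotient.eq_zero_iff_mem, IsLocalization.algebraMap_mem_map_algebraMap_iff 𝔭.primeCompl]
  simp [Ideal.primeCompl]

theorem LocalRingAt.nontrivial (hI : I ≤ 𝔭) : Nontrivial (LocalRingAt I 𝔭) := by
  refine nontrivial_of_ne (algebraMap S _ 1) 0 fun h => ?_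
  obtain ⟨U, hU, hUI⟩ := LocalRingAt.algebraMap_eq_zero_iff.1 h
  exact hU (hI (by simpa using hUI))

instance [Nontrivial (LocalRingAt I 𝔭)] : IsLocalRing (LocalRingAt I 𝔭) :=
  IsLocalRing.of_surjective' _ Ideal.Quotient.mk_surjective

theorem LocalRingAt.isUnit_algebraMap_iff [Nontrivial (LocalRingAt I 𝔭)] {f : S} :
    IsUnit (algebraMap S (LocalRingAt I 𝔭) f) ↔ f ∉ 𝔭 := by
  have : IsLocalHom (Ideal.Quotient.mk (I.map (algebraMap S (Localization.AtPrime 𝔭)))) :=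
    .of_surjective _ Ideal.Quotient.mk_surjective
  rw [IsScalarTower.algebraMap_apply S (Localization.AtPrime 𝔭), Ideal.Quotient.algebraMap_eq,
    isUnit_map_iff, IsLocalization.AtPrime.isUnit_to_map_iff _ 𝔭]
  rfl

theorem LocalRingAt.exists_algebraMap_mul_eq (y : LocalRingAt I 𝔭) :
    ∃ U ∉ 𝔭, ∃ V, algebraMap S (LocalRingAt I 𝔭) U * y = algebraMap S _ V := by
  obtain ⟨y, rfl⟩ := Ideal.Quotient.mk_surjective y
  obtain ⟨⟨V, U⟩, h⟩ := IsLocalization.surj 𝔭.primeCompl y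
  refine ⟨U, U.2, V, ?_⟩
  rw [IsScalarTower.algebraMap_apply S (Localization.AtPrime 𝔭) _ V, ← h, map_mul, mul_comm]
  rfl

theorem LocalRingAt.map_eq_maximalIdeal [Nontrivial (LocalRingAt I 𝔭)] :
    𝔭.map (algebraMap S (LocalRingAt I 𝔭)) = IsLocalRing.maximalIdeal (LocalRingAt I 𝔭) := by
  refine le_antisymm (Ideal.map_le_iff_le_comap.2 fun f hf => ?_) fun y hy => ?_
  · exact fun hunit => LocalRingAt.isUnit_algebraMap_iff.1 hunit hf
  · obtain ⟨U, hU, V, hUV⟩ := LocalRingAt.exists_algebraMap_mul_eq y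
    have hV : V ∈ 𝔭 := by
      by_contra hV
      rw [← LocalRingAt.isUnit_algebraMap_iff (I := I), ← hUV] at hV
      exact hy (isUnit_of_mul_isUnit_right hV)
    rw [← Ideal.unit_mul_mem_iff_mem _ (LocalRingAt.isUnit_algebraMap_iff.2 hU), hUV]
    exact Ideal.mem_map_of_mem _ hV

theorem LocalRingAt.exists_of_associated [Nontrivial (LocalRingAt I 𝔭)] {x y : S}
    (h : Associated (algebraMap S (LocalRingAt I 𝔭) x) (algebraMap S (LocalRingAt I 𝔭) y)) :
    ∃ U ∉ 𝔭, ∃ V ∉ 𝔭, U * x - V * y ∈ I := by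
  obtain ⟨c, hc⟩ := h
  obtain ⟨V, hV, U, hUV⟩ := LocalRingAt.exists_algebraMap_mul_eq (c : LocalRingAt I 𝔭)
  have hU : U ∉ 𝔭 := by
    rw [← LocalRingAt.isUnit_algebraMap_iff (I := I), ← hUV]
    exact (LocalRingAt.isUnit_algebraMap_iff.2 hV).mul c.isUnit
  obtain ⟨T, hT, hTI⟩ : ∃ T ∉ 𝔭, T * (U * x - V * y) ∈ I := by
    rw [← LocalRingAt.algebraMap_eq_zero_iff, map_sub, map_mul, map_mul, ← hUV, ← hc]
    ring
  refine ⟨T * U, ‹𝔭.IsPrime›.mul_notMem hT hU, T * V, ‹𝔭.IsPrime›.mul_notMem hT hV, ?_⟩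
  rwa [mul_assoc, mul_assoc, ← mul_sub]

end LocalRingAt

section PrincipalMaximalIdeal

open IsLocalRing

variable {O : Type*} [CommRing O] [IsLocalRing O] [IsNoetherianRing O]

theorem exists_associated_pow_of_maximalIdeal_eq_span {π x : O}
    (hπ : maximalIdeal O = Ideal.span {π}) (hx : x ≠ 0) : ∃ r, Associated x (π ^ r) := by
  have hmult : FiniteMultiplicity π x := by
    by_contra hinf
    have hmem : x ∈ ⨅ i, maximalIdeal O ^ i := Ideal.mem_iInf.2 fun i => by
      rw [hπ, Ideal.span_singleton_pow, Ideal.mem_span_singleton]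
      exact FiniteMultiplicity.not_iff_forall.1 hinf i
    rw [Ideal.iInf_pow_eq_bot_of_isLocalRing _ (maximalIdeal.isMaximal O).ne_top] at hmem
    exact hx hmem
  obtain ⟨c, hc, hdvd⟩ := hmult.exists_eq_pow_mul_and_not_dvd
  have hcunit : IsUnit c := by
    rwa [← notMem_maximalIdeal, hπ, Ideal.mem_span_singleton]
  exact ⟨multiplicity π x, .symm ⟨hcunit.unit, hc.symm⟩⟩

theorem exists_associated_pow_pow_of_isPrincipal (hprinc : (maximalIdeal O).IsPrincipal) {x y : O}
    (hx : x ∈ maximalIdeal O) (hx0 : x ≠ 0) (hy : y ∈ maximalIdeal O) (hy0 : y ≠ 0) :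
    ∃ s ≠ 0, ∃ r ≠ 0, Associated (x ^ s) (y ^ r) := by
  obtain ⟨π, hπ⟩ := hprinc
  have hpos {z : O} (hz : z ∈ maximalIdeal O) {r : ℕ} (h : Associated z (π ^ r)) : r ≠ 0 := by
    rintro rfl
    exact hz (associated_one_iff_isUnit.1 (by simpa using h))
  obtain ⟨r, hr⟩ := exists_associated_pow_of_maximalIdeal_eq_span hπ hx0
  obtain ⟨s, hs⟩ := exists_associated_pow_of_maximalIdeal_eq_span hπ hy0
  refine ⟨s, hpos hy hs, r, hpos hx hr, hr.pow_pow.trans ?_⟩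
  rw [← pow_mul, mul_comm, pow_mul]
  exact hs.symm.pow_pow

end PrincipalMaximalIdeal

section Jacobian

variable {σ K : Type*} [Field K] {v : σ}

/-- The gradient of a polynomial at the point `x`. -/
noncomputable def gradientAt (x : σ → K) : MvPolynomial σ K →ₗ[K] (σ → K) :=
  LinearMap.pi fun i => (aeval x).toLinearMap ∘ₗ (pderiv i).toLinearMap

theorem gradientAt_apply (x : σ → K) (f : MvPolynomial σ K) (i : σ) :
    gradientAt x f i = eval x (pderiv i f) := by
  simp [gradientAt, aeval_eq_eval]

/-- The space of gradients at `x` of the elements of `I`, whose dimension is `jacobianRank I x`. -/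
noncomputable def jacobianRowSpace (I : Ideal (MvPolynomial σ K)) (x : σ → K) :
    Submodule K (σ → K) :=
  (I.restrictScalars K).map (gradientAt x)

theorem jacobianRank_eq_finrank {n : ℕ} (I : Ideal (MvPolynomial (Fin (n + 1)) K))
    (x : Fin (n + 1) → K) :
    jacobianRank I x = Module.finrank K (jacobianRowSpace I x) := by
  have hset : {w : Fin (n + 1) → K | ∃ f ∈ I, w = fun i => eval x (pderiv i f)} =
      jacobianRowSpace I x := by
    ext w
    simp [jacobianRowSpace, funext_iff, gradientAt_apply, eq_comm]
  rw [jacobianRank, hset, Submodule.span_eq]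

theorem finrank_ker_proj_add_one [Fintype σ] :
    Module.finrank K (LinearMap.ker (LinearMap.proj v : (σ → K) →ₗ[K] K)) + 1 =
      Fintype.card σ := by
  have hrange : LinearMap.range (LinearMap.proj v : (σ → K) →ₗ[K] K) = ⊤ :=
    LinearMap.range_eq_top.2 (LinearMap.proj_surjective v)
  have := LinearMap.finrank_range_add_finrank_ker (LinearMap.proj v : (σ → K) →ₗ[K] K)
  rwa [hrange, finrank_top, Module.finrank_self, Module.finrank_pi, add_comm] at this

/-- The linear form `∑ i, w i * X i` with coefficient vector `w`. -/
noncomputable abbrev linearForm [Fintype σ] : (σ → K) →ₗ[K] MvPolynomial σ K :=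
  Fintype.linearCombination K X

theorem linearForm_mem_coordPrime [Fintype σ] {w : σ → K} (hw : w v = 0) :
    linearForm w ∈ coordPrime K v := by
  rw [linearForm, Fintype.linearCombination_apply]
  refine sum_mem fun j _ => ?_
  rcases eq_or_ne j v with rfl | hj
  · simp [hw]
  · exact Submodule.smul_of_tower_mem _ _ (X_mem_coordPrime hj)

variable [DecidableEq σ]

theorem gradientAt_single_mul_X {j : σ} (hj : j ≠ v) (g : MvPolynomial σ K) :
    gradientAt (Pi.single v 1) (g * X j) = Pi.single j (eval (Pi.single v 1) g) := by
  ext i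
  rw [gradientAt_apply, pderiv_mul, map_add, map_mul, map_mul, eval_X, Pi.single_eq_of_ne hj,
    mul_zero, zero_add, pderiv_X]
  rcases eq_or_ne i j with rfl | hij
  · simp
  · simp [hij, hij.symm]

theorem gradientAt_single_apply_self {f : MvPolynomial σ K} (hf : f ∈ coordPrime K v) :
    gradientAt (Pi.single v 1) f v = 0 := by
  induction hf using Submodule.closure_induction with
  | zero => simp
  | add f g _ _ hf hg => rw [map_add, Pi.add_apply, hf, hg, add_zero]
  | smul_mem g x hx =>
    obtain ⟨j, hj, rfl⟩ := hx
    rw [smul_eq_mul, gradientAt_single_mul_X hj, Pi.single_eq_of_ne (Ne.symm hj)]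

theorem gradientAt_single_of_isHomogeneous {f : MvPolynomial σ K} {k : ℕ}
    (hf : f.IsHomogeneous (k + 1)) {j : σ} (hj : j ≠ v) :
    gradientAt (Pi.single v 1) f j = coeff (Finsupp.single v k + Finsupp.single j 1) f := by
  rw [gradientAt_apply, eval_single_of_isHomogeneous (k := k) hf.pderiv, coeff_pderiv,
    Finsupp.single_eq_of_ne hj]
  simp

theorem jacobianRowSpace_le_ker_proj {I : Ideal (MvPolynomial σ K)} (hI : I ≤ coordPrime K v) :
    jacobianRowSpace I (Pi.single v 1) ≤ LinearMap.ker (LinearMap.proj v : (σ → K) →ₗ[K] K) := by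
  rintro _ ⟨f, hf, rfl⟩
  exact gradientAt_single_apply_self (hI hf)

theorem homogeneousComponent_sub_linearForm_mem_sq [Fintype σ] {f : MvPolynomial σ K}
    (hf : f ∈ coordPrime K v) (k : ℕ) :
    homogeneousComponent (k + 1) f -
        X v ^ k * linearForm (gradientAt (Pi.single v 1) (homogeneousComponent (k + 1) f)) ∈
      coordPrime K v ^ 2 := by
  induction hf using Submodule.closure_induction with
  | zero => simp
  | add f g _ _ hf hg =>
    convert add_mem hf hg using 1
    simp only [map_add]
    ring
  | smul_mem g x hx =>
    obtain ⟨j, hj, rfl⟩ := hx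
    have hcomp : homogeneousComponent (k + 1) (g * X j) = homogeneousComponent k g * X j := by
      simpa [X] using homogeneousComponent_mul_monomial (k + 1) g (Finsupp.single j 1) 1
    have hg := sub_C_coeff_mul_X_pow_mem_coordPrime (v := v)
      (homogeneousComponent_isHomogeneous k g)
    rw [← eval_single_of_isHomogeneous (homogeneousComponent_isHomogeneous k g)] at hg
    rw [smul_eq_mul, hcomp, gradientAt_single_mul_X hj, sq, linearForm,
      Fintype.linearCombination_apply_single, smul_eq_C_mul]
    convert Ideal.mul_mem_mul hg (X_mem_coordPrime hj) using 1
    ring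

end Jacobian

section LinearAlgebra

variable {K : Type*} [Field K]

theorem exists_le_sup_span_singleton {V : Type*} [AddCommGroup V] [Module K V]
    {W H : Submodule K V} [FiniteDimensional K H] (hWH : W ≤ H)
    (hfinrank : Module.finrank K H ≤ Module.finrank K W + 1) :
    ∃ x ∈ H, H ≤ W ⊔ Submodule.span K {x} := by
  by_cases hHW : H ≤ W
  · exact ⟨0, zero_mem H, hHW.trans le_sup_left⟩
  obtain ⟨x, hxH, hxW⟩ := SetLike.not_le_iff_exists.1 hHW
  have hle : W ⊔ Submodule.span K {x} ≤ H :=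
    sup_le hWH ((Submodule.span_singleton_le_iff_mem x H).2 hxH)
  have := Submodule.finiteDimensional_of_le hle
  have hlt : W < W ⊔ Submodule.span K {x} :=
    left_lt_sup.2 fun h => hxW (h (Submodule.mem_span_singleton_self x))
  have := Submodule.finrank_lt_finrank_of_lt hlt
  exact ⟨x, hxH, (Submodule.eq_of_le_of_finrank_le hle (by omega)).ge⟩

theorem card_le_finrank_of_triangular {ι α : Type*} [Finite ι] [LinearOrder α] {r : ι → α}
    (hr : r.Injective) (T : Finset ι) (W : Submodule K (ι → K))
    (hW : ∀ i ∈ T, ∃ w ∈ W, w i ≠ 0 ∧ ∀ k ∈ T, r i < r k → w k = 0) :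
    T.card ≤ Module.finrank K W := by
  classical
  choose w hwW hwdiag hwtri using fun i : T => hW i i.2
  have hindep : LinearIndependent K (fun i : T => (⟨w i, hwW i⟩ : W)) := by
    refine LinearIndependent.of_comp W.subtype (Fintype.linearIndependent_iff.2 fun c hc => ?_)
    by_contra! hne
    obtain ⟨i, hi, hmax⟩ := Finset.exists_max_image {i : T | c i ≠ 0} (fun i => r i)
      (by simpa [Finset.filter_nonempty_iff] using hne)
    simp only [Finset.mem_filter, Finset.mem_univ, true_and] at hi hmax
    have hcoord : ∑ k, c k * w k i = 0 := by
      simpa [Finset.sum_apply] using congr_fun hc i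
    rw [Finset.sum_eq_single i] at hcoord
    · exact mul_ne_zero hi (hwdiag i) hcoord
    · intro k _ hki
      by_cases hk : c k = 0
      · rw [hk, zero_mul]
      · have hlt := (hmax k hk).lt_of_ne (hr.ne (Subtype.coe_injective.ne hki))
        rw [hwtri k i i.2 hlt, mul_zero]
    · simp
  simpa using hindep.fintype_card_le_finrank

end LinearAlgebra

section TangentSpace

open IsLocalRing

variable {σ K : Type*} [Field K] {v : σ} {I : Ideal (MvPolynomial σ K)}

/-- The local ring of the affine cone over `V(I)` at the generic point of the line `P_v`. -/
abbrev CoordLocalRing (I : Ideal (MvPolynomial σ K)) (v : σ) : Type _ :=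
  LocalRingAt I (coordPrime K v)

theorem IsStandardAlong.algebraMap_monomial_ne_zero {m : MonomialOrder σ} {u : σ →₀ ℕ}
    (hu : IsStandardAlong m I v u) (hv : IsTopVariable m v) (hI : IsHomog I) :
    algebraMap _ (CoordLocalRing I v) (monomial u (1 : K)) ≠ 0 := by
  intro hzero
  obtain ⟨U, hU, hUI⟩ := LocalRingAt.algebraMap_eq_zero_iff.1 hzero
  exact mul_monomial_notMem hv hI hu hU hUI

variable [Nontrivial (CoordLocalRing I v)]

theorem algebraMap_X_mem_maximalIdeal {a : σ} (ha : a ≠ v) :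
    algebraMap (MvPolynomial σ K) (CoordLocalRing I v) (X a) ∈ maximalIdeal (CoordLocalRing I v) :=
  LocalRingAt.map_eq_maximalIdeal.le (Ideal.mem_map_of_mem _ (X_mem_coordPrime ha))

variable [Fintype σ] [DecidableEq σ]

theorem algebraMap_linearForm_mem_maximalIdeal_sq (hI : IsHomog I) (hIv : I ≤ coordPrime K v)
    {w : σ → K} (hw : w ∈ jacobianRowSpace I (Pi.single v 1)) :
    algebraMap _ (CoordLocalRing I v) (linearForm w) ∈
      maximalIdeal (CoordLocalRing I v) ^ 2 := by
  obtain ⟨f, hf, rfl⟩ := hw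
  rw [← sum_homogeneousComponent f, map_sum, map_sum, map_sum]
  refine sum_mem fun d _ => ?_
  cases d with
  | zero =>
    have hzero : gradientAt (Pi.single v 1) (homogeneousComponent 0 f) = 0 := by
      ext i
      rw [gradientAt_apply, homogeneousComponent_zero, pderiv_C, map_zero, Pi.zero_apply]
    rw [hzero, map_zero, map_zero]
    exact zero_mem _
  | succ k =>
    have hcomp : algebraMap _ (CoordLocalRing I v) (homogeneousComponent (k + 1) f) = 0 :=
      LocalRingAt.algebraMap_eq_zero_iff.2
        ⟨1, (Ideal.ne_top_iff_one _).1 coordPrime.isPrime.ne_top, by simpa using hI f hf (k + 1)⟩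
    have hunit : IsUnit (algebraMap (MvPolynomial σ K) (CoordLocalRing I v) (X v ^ k)) := by
      rw [map_pow]
      exact (LocalRingAt.isUnit_algebraMap_iff.2 X_self_notMem_coordPrime).pow k
    have := Ideal.mem_map_of_mem (algebraMap (MvPolynomial σ K) (CoordLocalRing I v))
      (homogeneousComponent_sub_linearForm_mem_sq (hIv hf) k)
    rwa [Ideal.map_pow, LocalRingAt.map_eq_maximalIdeal, map_sub, hcomp, zero_sub, neg_mem_iff,
      map_mul, Ideal.unit_mul_mem_iff_mem _ hunit] at this

theorem maximalIdeal_eq_span_linearForm (hI : IsHomog I) (hIv : I ≤ coordPrime K v)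
    {x : σ → K} (hx : x v = 0)
    (hspan : LinearMap.ker (LinearMap.proj v : (σ → K) →ₗ[K] K) ≤
      jacobianRowSpace I (Pi.single v 1) ⊔ Submodule.span K {x}) :
    maximalIdeal (CoordLocalRing I v) =
      Ideal.span {algebraMap _ (CoordLocalRing I v) (linearForm x)} := by
  refine le_antisymm ?_ ?_
  · refine Submodule.le_of_le_smul_of_le_jacobson_bot (IsNoetherian.noetherian _)
      (maximalIdeal_le_jacobson _) ?_
    nth_rw 1 [← LocalRingAt.map_eq_maximalIdeal]
    refine Ideal.map_le_iff_le_comap.2 (Ideal.span_le.2 ?_)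
    rintro _ ⟨j, hj : j ≠ v, rfl⟩
    have hjker : Pi.single j 1 ∈ LinearMap.ker (LinearMap.proj v : (σ → K) →ₗ[K] K) :=
      Pi.single_eq_of_ne hj.symm 1
    obtain ⟨w, hw, y, hy, hwy⟩ := Submodule.mem_sup.1 (hspan hjker)
    obtain ⟨c, rfl⟩ := Submodule.mem_span_singleton.1 hy
    have hX : (X j : MvPolynomial σ K) = linearForm w + C c * linearForm x := by
      rw [← smul_eq_C_mul, ← map_smul, ← map_add, hwy, linearForm,
        Fintype.linearCombination_apply_single, one_smul]
    rw [SetLike.mem_coe, Ideal.mem_comap, hX, map_add, map_mul, add_comm, smul_eq_mul, ← sq]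
    exact Submodule.add_mem_sup (Ideal.mul_mem_left _ _ (Ideal.mem_span_singleton_self _))
      (algebraMap_linearForm_mem_maximalIdeal_sq hI hIv hw)
  · rw [Ideal.span_singleton_le_iff_mem, ← LocalRingAt.map_eq_maximalIdeal]
    exact Ideal.mem_map_of_mem _ (linearForm_mem_coordPrime hx)

end TangentSpace

section JacobianRank

open IsLocalRing

variable {σ K : Type*} [Field K] [DecidableEq σ] {m : MonomialOrder σ} {v a b : σ}
  {I : Ideal (MvPolynomial σ K)}

theorem exists_mem_jacobianRowSpace_of_monomial_mem (hI : IsHomog I) {i : σ} (hi : i ≠ v)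
    (hmem : monomial (Finsupp.single v 1 + Finsupp.single i 1) (1 : K) ∈ initialIdeal m I) :
    ∃ w ∈ jacobianRowSpace I (Pi.single v 1), w i ≠ 0 ∧
      ∀ k ≠ v, Finsupp.single i 1 ≺[m] Finsupp.single k 1 → w k = 0 := by
  obtain ⟨f, hf, hhom, hf0, hdeg⟩ := exists_isHomogeneous_degree_eq hI hmem
  replace hhom : f.IsHomogeneous (1 + 1) := by simpa using hhom
  refine ⟨gradientAt _ f, ⟨f, hf, rfl⟩, ?_, fun k hk hik => ?_⟩
  · rw [gradientAt_single_of_isHomogeneous hhom hi, ← hdeg]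
    exact m.coeff_degree_ne_zero_iff.2 hf0
  · rw [gradientAt_single_of_isHomogeneous hhom hk]
    refine m.coeff_eq_zero_of_lt ?_
    rw [hdeg, map_add, map_add]
    exact add_lt_add_right hik _

theorem card_le_finrank_jacobianRowSpace [Finite σ] (hI : IsHomog I) {T : Finset σ}
    (hT : ∀ i ∈ T, i ≠ v ∧
      monomial (Finsupp.single v 1 + Finsupp.single i 1) (1 : K) ∈ initialIdeal m I) :
    T.card ≤ Module.finrank K (jacobianRowSpace I (Pi.single v 1)) := by
  refine card_le_finrank_of_triangular (r := fun i => m.toSyn (Finsupp.single i 1))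
    (m.toSyn.injective.comp (Finsupp.single_left_injective one_ne_zero)) T _ fun i hi => ?_
  obtain ⟨w, hw, hwi, hwk⟩ := exists_mem_jacobianRowSpace_of_monomial_mem hI (hT i hi).1 (hT i hi).2
  exact ⟨w, hw, hwi, fun k hk => hwk k (hT k hk).1⟩

variable [Fintype σ]

theorem finrank_jacobianRowSpace_add_one_lt (hv : IsTopVariable m v) (hI : IsHomog I)
    (hIv : I ≤ coordPrime K v) (hav : a ≠ v)
    (ha : IsStandardAlong m I v (Finsupp.single a 1)) :
    Module.finrank K (jacobianRowSpace I (Pi.single v 1)) + 1 < Fintype.card σ := by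
  by_contra! hrank
  have := LocalRingAt.nontrivial hIv
  rw [← finrank_ker_proj_add_one (K := K) (v := v), Nat.add_le_add_iff_right] at hrank
  have hrow := Submodule.eq_of_le_of_finrank_le (jacobianRowSpace_le_ker_proj hIv) hrank
  have hmax := maximalIdeal_eq_span_linearForm hI hIv (x := 0) rfl (hrow ▸ le_sup_left)
  have hX := algebraMap_X_mem_maximalIdeal (I := I) hav
  rw [hmax, map_zero, map_zero, Ideal.mem_span_singleton, zero_dvd_iff] at hX
  exact ha.algebraMap_monomial_ne_zero hv hI hX

theorem isPrincipal_maximalIdeal (hI : IsHomog I) (hIv : I ≤ coordPrime K v)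
    [Nontrivial (CoordLocalRing I v)]
    (hrank : Fintype.card σ ≤ Module.finrank K (jacobianRowSpace I (Pi.single v 1)) + 2) :
    (maximalIdeal (CoordLocalRing I v)).IsPrincipal := by
  rw [← finrank_ker_proj_add_one (K := K) (v := v), Nat.add_le_add_iff_right] at hrank
  obtain ⟨x, hx, hspan⟩ := exists_le_sup_span_singleton (jacobianRowSpace_le_ker_proj hIv) hrank
  exact ⟨_, maximalIdeal_eq_span_linearForm hI hIv hx hspan⟩

theorem finrank_jacobianRowSpace_add_two_lt (hv : IsTopVariable m v) (hI : IsHomog I)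
    (hIv : I ≤ coordPrime K v) (hav : a ≠ v) (hbv : b ≠ v) (hab : a ≠ b)
    (ha : ∀ k, IsStandardAlong m I v (Finsupp.single a k))
    (hb : ∀ k, IsStandardAlong m I v (Finsupp.single b k)) :
    Module.finrank K (jacobianRowSpace I (Pi.single v 1)) + 2 < Fintype.card σ := by
  by_contra! hrank
  have := LocalRingAt.nontrivial hIv
  obtain ⟨s, hs, r, -, hassoc⟩ := exists_associated_pow_pow_of_isPrincipal
    (x := algebraMap _ (CoordLocalRing I v) (X a)) (y := algebraMap _ (CoordLocalRing I v) (X b))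
    (isPrincipal_maximalIdeal hI hIv hrank)
    (algebraMap_X_mem_maximalIdeal hav) ((ha 1).algebraMap_monomial_ne_zero hv hI)
    (algebraMap_X_mem_maximalIdeal hbv) ((hb 1).algebraMap_monomial_ne_zero hv hI)
  rw [← map_pow, ← map_pow] at hassoc
  obtain ⟨U, hU, V, hV, hUV⟩ := LocalRingAt.exists_of_associated hassoc
  rw [X_pow_eq_monomial, X_pow_eq_monomial] at hUV
  refine mul_monomial_sub_mul_monomial_notMem hv hI (ha s) (hb r) (fun k l h => ?_) hU hV hUV
  simpa [hav, hab, hs] using DFunLike.congr_fun h a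

end JacobianRank

section CoordinatePoint

variable {K : Type*} [Field K] {n : ℕ} {m : MonomialOrder (Fin (n + 1))} {Δ : SComplex n}
  {I : Ideal (MvPolynomial (Fin (n + 1)) K)} {v a : Fin (n + 1)}

theorem isStandardAlong_zero_of_mem_neighbors (hin : initialIdeal m I = Δ.srIdeal K)
    (ha : a ∈ Δ.neighbors v) : IsStandardAlong m I v 0 :=
  isStandardAlong_of_mem_faces hin
    (Δ.down_closed (SComplex.mem_neighbors.1 ha).2 (by simp))

theorem isStandardAlong_single_of_mem_neighbors (hin : initialIdeal m I = Δ.srIdeal K)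
    (ha : a ∈ Δ.neighbors v) (k : ℕ) : IsStandardAlong m I v (Finsupp.single a k) :=
  isStandardAlong_of_mem_faces hin (Δ.down_closed (SComplex.mem_neighbors.1 ha).2
    (Finset.insert_subset_insert _ Finsupp.support_single_subset))

theorem le_jacobianRank_add_card_neighbors (hI : IsHomog I)
    (hin : initialIdeal m I = Δ.srIdeal K) (v : Fin (n + 1)) :
    n ≤ jacobianRank I (Pi.single v 1) + (Δ.neighbors v).card := by
  have hcard : (insert v (Δ.neighbors v))ᶜ.card + ((Δ.neighbors v).card + 1) = n + 1 := by
    rw [← Finset.card_insert_of_notMem (a := v) (by simp [SComplex.mem_neighbors]),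
      Finset.card_compl_add_card, Fintype.card_fin]
  have hrank := card_le_finrank_jacobianRowSpace (m := m) (v := v) hI
    (T := (insert v (Δ.neighbors v))ᶜ) fun i hi => by
      rw [Finset.mem_compl, Finset.mem_insert, SComplex.mem_neighbors] at hi
      push Not at hi
      refine ⟨hi.1, ?_⟩
      rw [hin, SComplex.monomial_mem_srIdeal_iff,
        Finsupp.support_single_add_single hi.1.symm one_ne_zero one_ne_zero]
      exact hi.2 hi.1
  rw [jacobianRank_eq_finrank]
  omega

theorem jacobianRank_lt_of_mem_neighbors (hv : IsTopVariable m v) (hI : IsHomog I)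
    (hin : initialIdeal m I = Δ.srIdeal K) (ha : a ∈ Δ.neighbors v) :
    jacobianRank I (Pi.single v 1) < n := by
  have := finrank_jacobianRowSpace_add_one_lt hv hI
    (le_coordPrime hv hI (isStandardAlong_zero_of_mem_neighbors hin ha))
    (SComplex.mem_neighbors.1 ha).1 (isStandardAlong_single_of_mem_neighbors hin ha 1)
  rw [jacobianRank_eq_finrank]
  simpa using this

theorem card_neighbors_le_one (hv : IsTopVariable m v) (hI : IsHomog I)
    (hin : initialIdeal m I = Δ.srIdeal K) (hrank : n ≤ jacobianRank I (Pi.single v 1) + 1) :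
    (Δ.neighbors v).card ≤ 1 := by
  refine Finset.card_le_one.2 fun a ha b hb => ?_
  by_contra hab
  have := finrank_jacobianRowSpace_add_two_lt hv hI
    (le_coordPrime hv hI (isStandardAlong_zero_of_mem_neighbors hin ha))
    (SComplex.mem_neighbors.1 ha).1 (SComplex.mem_neighbors.1 hb).1 hab
    (isStandardAlong_single_of_mem_neighbors hin ha)
    (isStandardAlong_single_of_mem_neighbors hin hb)
  rw [← jacobianRank_eq_finrank, Fintype.card_fin] at this
  omega

theorem single_mem_projZeros_of_mem_neighbors (hv : IsTopVariable m v) (hI : IsHomog I)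
    (hin : initialIdeal m I = Δ.srIdeal K) (ha : a ∈ Δ.neighbors v) :
    Pi.single v 1 ∈ projZeros I :=
  ⟨by simp, fun _ hf => eval_single_eq_zero_of_mem_coordPrime
    (le_coordPrime hv hI (isStandardAlong_zero_of_mem_neighbors hin ha) hf)⟩

theorem P0_nonsingular_iff_free_vertex_general (hn : n ≠ 0) (hv : IsTopVariable m v)
    (hI : IsHomog I) (hin : initialIdeal m I = Δ.srIdeal K) :
    (Pi.single v 1 ∈ projZeros I ∧ jacobianRank I (Pi.single v 1) = n - 1) ↔
      Δ.FreeVertex v := by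
  have hlower := le_jacobianRank_add_card_neighbors hI hin v
  rw [SComplex.freeVertex_iff_card_neighbors]
  constructor
  · rintro ⟨-, hrank⟩
    have := card_neighbors_le_one hv hI hin (by omega)
    omega
  · intro hcard
    obtain ⟨a, ha⟩ := Finset.card_pos.1 (hcard ▸ one_pos)
    have := jacobianRank_lt_of_mem_neighbors hv hI hin ha
    exact ⟨single_mem_projZeros_of_mem_neighbors hv hI hin ha, by omega⟩

end CoordinatePoint

/-- **Statement 6.** With `K` algebraically closed, `X_0 > ⋯ > X_n`, `in_<(I) = I_Δ` for a
graph `Δ` on `{0, …, n}` having every `i` as vertex, and `X = V(I) ⊆ ℙⁿ` a connected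
projective curve, the coordinate point `P_0 = [1 : 0 : ⋯ : 0]` is a nonsingular point of `X`
(Jacobian criterion: it lies on `X` and the Jacobian rank there is `n - 1`) if and only if
`0` is a free vertex of `Δ`. -/
theorem P0_nonsingular_iff_free_vertex {K : Type*} [Field K] [IsAlgClosed K] {n : ℕ}
    (m : MonomialOrder (Fin (n + 1))) (hm : m.Descending)
    (Δ : SComplex n) (hgraph : Δ.IsGraph)
    (hvert : ∀ i : Fin (n + 1), ({i} : Finset (Fin (n + 1))) ∈ Δ.faces)
    (I : Ideal (MvPolynomial (Fin (n + 1)) K)) (hI : IsHomog I)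
    (hin : initialIdeal m I = Δ.srIdeal K)
    (hcurve : ringKrullDim (MvPolynomial (Fin (n + 1)) K ⧸ I) = 2)
    (hconn : IsConnectedProjVariety I) :
    ((fun i => if i = 0 then 1 else 0) ∈ projZeros I ∧
        jacobianRank I (fun i => if i = 0 then 1 else 0) = n - 1) ↔
      Δ.FreeVertex 0 := by
  have hP : (fun i => if i = 0 then 1 else 0 : Fin (n + 1) → K) = Pi.single 0 1 :=
    funext fun i => (Pi.single_apply 0 1 i).symm
  rw [hP]
  exact P0_nonsingular_iff_free_vertex_general hgraph.ne_zero
    (isTopVariable_zero_of_descending hm) hI hin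
end

section
/- Let K be any field, S = K[X_0, X_1, X_2, X_3], and let J ⊆ S be the ideal generated by the 2×2 minors of the 2×3 matrix with first row (X_1+X_2+X_3, X_1+X_3, X_1) and second row (X_1+X_3, X_1, X_0+X_1). Then for every monomial order < with X_0 > X_1 > X_2 > X_3, in_<(J) = (X_0X_1, X_0X_2, X_1X_2); i.e., in_<(J) = I_Δ where Δ is the tree on {0,1,2,3} with edges {0,3}, {1,3}, {2,3}. -/
open MvPolynomial

/-- The tree (star) on `{0, 1, 2, 3}` with edges `{0,3}`, `{1,3}`, `{2,3}`. -/
def starTree : SComplex 3 where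
  faces := {s | s ⊆ {0, 3} ∨ s ⊆ {1, 3} ∨ s ⊆ {2, 3}}
  down_closed := by
    intro s t hs hts
    rcases hs with h | h | h
    exacts [Or.inl (hts.trans h), Or.inr (Or.inl (hts.trans h)),
      Or.inr (Or.inr (hts.trans h))]

/-!
The zero set of `J` is a twisted cubic through the coordinate points `P_0`, `P_1`, `P_2`, and for
`i < 3` the only one of the functions `X_j / X_3` with a pole at `P_i` is `X_i / X_3`. The monomials
outside `(X_0X_1, X_0X_2, X_1X_2)` are the `X_i ^ a * X_3 ^ b`; comparing pole orders at the three
points shows that in each degree they are linearly independent on the curve. Hence no nonzero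
element of `J` is a combination of them, so dividing an element of `J` by three elements of `J`
with leading monomials `X_0X_1`, `X_0X_2`, `X_1X_2` leaves no remainder.
-/

section InitialIdeal

open scoped MonomialOrder

theorem mdeg_eq_degree {σ R : Type*} [CommSemiring R] (m : MonomialOrder σ)
    (f : MvPolynomial σ R) : m.mdeg f = m.degree f :=
  rfl

variable {σ K ι : Type*} [Field K] {m : MonomialOrder σ}

theorem exists_degree_le_degree_linearCombination {b : ι → MvPolynomial σ K}
    {g : ι →₀ MvPolynomial σ K} (hne : Finsupp.linearCombination _ b g ≠ 0)
    (hle : ∀ i, m.degree (b i * g i) ≼[m] m.degree (Finsupp.linearCombination _ b g)) :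
    ∃ i, m.degree (b i) ≤ m.degree (Finsupp.linearCombination _ b g) := by
  set f := Finsupp.linearCombination _ b g
  obtain ⟨i, -, hi⟩ : ∃ i ∈ g.support, coeff (m.degree f) (g i • b i) ≠ 0 := by
    apply Finset.exists_ne_zero_of_sum_ne_zero
    rw [← coeff_sum]
    exact m.coeff_degree_ne_zero_iff.2 hne
  rw [smul_eq_mul, mul_comm] at hi
  have hmul : b i * g i ≠ 0 := fun h => hi (by rw [h, coeff_zero])
  have hdeg : m.degree (b i * g i) = m.degree f :=
    m.toSyn.injective ((hle i).antisymm (m.le_degree (mem_support_iff.2 hi)))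
  exact ⟨i, hdeg ▸ m.degree_mul' hmul ▸ le_self_add⟩

theorem exists_degree_le_degree_of_mem {I : Ideal (MvPolynomial σ K)} {b : ι → MvPolynomial σ K}
    (hbI : ∀ i, b i ∈ I) (hb0 : ∀ i, b i ≠ 0)
    (hstd : ∀ r ∈ I, (∀ e ∈ r.support, ∀ i, ¬ m.degree (b i) ≤ e) → r = 0)
    {f : MvPolynomial σ K} (hfI : f ∈ I) (hf0 : f ≠ 0) : ∃ i, m.degree (b i) ≤ m.degree f := by
  obtain ⟨g, r, hfr, hle, hr⟩ :=
    m.div (fun i => (m.leadingCoeff_ne_zero_iff.2 (hb0 i)).isUnit) f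
  have hrI : r ∈ I := by
    rw [← I.add_mem_iff_right (Ideal.sum_mem _ fun i _ => I.mul_mem_left (g i) (hbI i))]
    exact hfr ▸ hfI
  obtain rfl : f = Finsupp.linearCombination _ b g := by rw [hfr, hstd r hrI hr, add_zero]
  exact exists_degree_le_degree_linearCombination hf0 hle

theorem initialIdeal_eq_span_monomial_degree {I : Ideal (MvPolynomial σ K)}
    {b : ι → MvPolynomial σ K} (hbI : ∀ i, b i ∈ I) (hb0 : ∀ i, b i ≠ 0)
    (hstd : ∀ r ∈ I, (∀ e ∈ r.support, ∀ i, ¬ m.degree (b i) ≤ e) → r = 0) :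
    initialIdeal m I = Ideal.span (Set.range fun i => monomial (m.degree (b i)) (1 : K)) := by
  apply le_antisymm
  · rw [initialIdeal, Ideal.span_le]
    rintro _ ⟨f, hfI, hf0, rfl⟩
    obtain ⟨i, hi⟩ := exists_degree_le_degree_of_mem hbI hb0 hstd hfI hf0
    rw [mdeg_eq_degree]
    exact Ideal.mem_of_dvd _ (monomial_dvd_monomial.2 ⟨Or.inr hi, dvd_rfl⟩)
      (Ideal.subset_span ⟨i, rfl⟩)
  · rw [Ideal.span_le]
    rintro _ ⟨i, rfl⟩
    exact Ideal.subset_span ⟨b i, hbI i, hb0 i, by rw [mdeg_eq_degree]⟩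

end InitialIdeal

section Weight

variable {σ : Type*} {d : σ → ℕ}

theorem weight_le_degree_mul {c : ℕ} {e : σ →₀ ℕ} (hd : ∀ j ∈ e.support, d j ≤ c) :
    e.weight d ≤ e.degree * c := by
  rw [Finsupp.weight_apply, Finsupp.degree_apply, Finset.sum_mul]
  exact Finset.sum_le_sum fun j hj => Nat.mul_le_mul_left _ (hd j hj)

theorem weight_lt_weight_single_add_single {o i : σ} (hi : d o < d i)
    (hd : ∀ j, j ≠ i → d j ≤ d o) {e : σ →₀ ℕ} {a b : ℕ} (hea : e i < a)
    (hdeg : e.degree = a + b) :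
    e.weight d < (Finsupp.single i a + Finsupp.single o b).weight d := by
  have hrest : (e.erase i).weight d ≤ (e.erase i).degree * d o :=
    weight_le_degree_mul fun j hj => hd j fun hji => by simp [hji] at hj
  have hsplit := Finsupp.single_add_erase i e
  rw [← hsplit, map_add, Finsupp.degree_single] at hdeg
  rw [← hsplit]
  simp only [map_add, Finsupp.weight_single, smul_eq_mul]
  nlinarith

end Weight

section SolePole

open scoped Polynomial

variable {σ R : Type*} [CommSemiring R]

theorem sum_ne_zero_of_natDegree_lt {R ι : Type*} [Semiring R] {s : Finset ι} {f : ι → R[X]}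
    {a : ι} (ha : a ∈ s) (hfa : f a ≠ 0)
    (hlt : ∀ b ∈ s, b ≠ a → (f b).natDegree < (f a).natDegree) : ∑ b ∈ s, f b ≠ 0 := by
  intro h
  apply Polynomial.leadingCoeff_ne_zero.2 hfa
  have hcoeff := congrArg (Polynomial.coeff · (f a).natDegree) h
  rwa [Polynomial.finsetSum_coeff, Finset.sum_eq_single_of_mem a ha fun b hb hba =>
    Polynomial.coeff_eq_zero_of_natDegree_lt (hlt b hb hba)] at hcoeff

theorem natDegree_aeval_monomial [IsDomain R] {w : σ → R[X]} (hw : ∀ j, w j ≠ 0) {c : R}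
    (hc : c ≠ 0) (e : σ →₀ ℕ) :
    (aeval w (monomial e c)).natDegree = e.weight fun j => (w j).natDegree := by
  rw [aeval_monomial, Polynomial.algebraMap_eq, Polynomial.natDegree_C_mul hc, Finsupp.prod,
    Polynomial.natDegree_prod _ _ fun j _ => pow_ne_zero _ (hw j), Finsupp.weight_apply,
    Finsupp.sum]
  simp only [Polynomial.natDegree_pow, smul_eq_mul]

theorem aeval_monomial_ne_zero [IsDomain R] {w : σ → R[X]} (hw : ∀ j, w j ≠ 0) {c : R}
    (hc : c ≠ 0) (e : σ →₀ ℕ) : aeval w (monomial e c) ≠ 0 := by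
  rw [aeval_monomial]
  exact mul_ne_zero (Polynomial.C_ne_zero.2 hc)
    (Finset.prod_ne_zero_iff.2 fun j _ => pow_ne_zero _ (hw j))

/-- Along the parametrized projective curve `w`, among the functions `X_j / X_o` only `X_i / X_o`
has a pole at the parameter value `∞`. In terms of degrees of polynomials this reads
`deg w_j ≤ deg w_o < deg w_i` for all `j ≠ i`. -/
structure HasSolePole (w : σ → R[X]) (o i : σ) : Prop where
  ne_zero : ∀ j, w j ≠ 0
  natDegree_lt : (w o).natDegree < (w i).natDegree
  natDegree_le : ∀ j, j ≠ i → (w j).natDegree ≤ (w o).natDegree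

/-- The exponent `e` is supported on an edge `{i, o}` of the star with centre `o`, that is, its
monomial lies outside the Stanley–Reisner ideal of the star. -/
def IsStarSupported (o : σ) (e : σ →₀ ℕ) : Prop :=
  ((e.support : Set σ) \ {o}).Subsingleton

variable {o i : σ} {e : σ →₀ ℕ}

theorem IsStarSupported.eq_single_add_single (he : IsStarSupported o e) (hio : i ≠ o)
    (hi : e i ≠ 0) : e = Finsupp.single i (e i) + Finsupp.single o (e.degree - e i) := by
  classical
  have hrest : e.erase i = Finsupp.single o (e.erase i o) := by
    rw [← Finsupp.support_subset_singleton]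
    intro j hj
    rw [Finsupp.support_erase, Finset.mem_erase] at hj
    by_contra hjo
    exact hj.1 (he ⟨hj.2, by simpa using hjo⟩ ⟨by simpa using hi, hio⟩)
  have hsplit := Finsupp.single_add_erase i e
  rw [hrest] at hsplit
  have hdeg := congrArg Finsupp.degree hsplit
  rw [map_add, Finsupp.degree_single, Finsupp.degree_single] at hdeg
  rw [← hdeg, Nat.add_sub_cancel_left, hsplit]

variable [IsDomain R] {w : σ → R[X]} {p : MvPolynomial σ R} {n : ℕ}

theorem HasSolePole.apply_eq_zero_of_mem_support (hw : HasSolePole w o i)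
    (hp : p.IsHomogeneous n) (hstar : ∀ e ∈ p.support, IsStarSupported o e)
    (hpw : aeval w p = 0) : ∀ e ∈ p.support, e i = 0 := by
  by_contra! ⟨e₀, he₀, hi₀⟩
  have hio : i ≠ o := fun h => hw.natDegree_lt.ne (by rw [h])
  obtain ⟨e, he, hmax⟩ := p.support.exists_max_image (fun e => e i) ⟨e₀, he₀⟩
  have hdeg : ∀ {e'}, e' ∈ p.support → e'.degree = n := fun h =>
    (hp.degree_eq_sum_deg_support h).symm
  have hform : ∀ {e'}, e' ∈ p.support → e' i = e i →
      e' = Finsupp.single i (e i) + Finsupp.single o (n - e i) := fun {e'} he' hi' => by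
    rw [← hi', ← hdeg he']
    exact (hstar e' he').eq_single_add_single hio (by have := hmax e₀ he₀; omega)
  rw [p.as_sum, map_sum] at hpw
  refine sum_ne_zero_of_natDegree_lt he
    (aeval_monomial_ne_zero hw.ne_zero (mem_support_iff.1 he) e) (fun e' he' hne => ?_) hpw
  rw [natDegree_aeval_monomial hw.ne_zero (mem_support_iff.1 he),
    natDegree_aeval_monomial hw.ne_zero (mem_support_iff.1 he')]
  have hlt : e' i < e i :=
    (hmax e' he').lt_of_ne fun h => hne ((hform he' h).trans (hform he rfl).symm)
  rw [hform he rfl]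
  refine weight_lt_weight_single_add_single (d := fun j => (w j).natDegree)
    hw.natDegree_lt hw.natDegree_le hlt ?_
  rw [hdeg he', Nat.add_sub_cancel' (hdeg he ▸ Finsupp.le_degree i e)]

theorem eq_zero_of_isHomogeneous_of_hasSolePole [Nontrivial σ] (hp : p.IsHomogeneous n)
    (hstar : ∀ e ∈ p.support, IsStarSupported o e)
    (hcurve : ∀ i, i ≠ o → ∃ w : σ → R[X], HasSolePole w o i ∧ aeval w p = 0) : p = 0 := by
  have hsupp : ∀ e ∈ p.support, e = Finsupp.single o n := by
    intro e he
    have hsingle : e = Finsupp.single o (e o) := by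
      rw [← Finsupp.support_subset_singleton]
      intro i hi
      by_contra hio
      obtain ⟨w, hw, hpw⟩ := hcurve i (by simpa using hio)
      exact Finsupp.mem_support_iff.1 hi (hw.apply_eq_zero_of_mem_support hp hstar hpw e he)
    have hdeg : e.degree = n := (hp.degree_eq_sum_deg_support he).symm
    rw [hsingle, Finsupp.degree_single] at hdeg
    rw [hsingle, hdeg]
  obtain ⟨i, hio⟩ := exists_ne o
  obtain ⟨w, hw, hpw⟩ := hcurve i hio
  have hmono := eq_monomial_of_support_subset_singleton hsupp
  rw [hmono] at hpw
  by_contra hne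
  refine aeval_monomial_ne_zero hw.ne_zero (fun hc => hne ?_) _ hpw
  rw [hmono, hc, monomial_zero]

attribute [local instance] MvPolynomial.gradedAlgebra

theorem eq_zero_of_mem_of_hasSolePole [Nontrivial σ] {I : Ideal (MvPolynomial σ R)}
    (hI : I.IsHomogeneous (homogeneousSubmodule σ R))
    (hcurve : ∀ i, i ≠ o → ∃ w : σ → R[X], HasSolePole w o i ∧ ∀ q ∈ I, aeval w q = 0)
    (hpI : p ∈ I) (hstar : ∀ e ∈ p.support, IsStarSupported o e) : p = 0 := by
  have hcomp : ∀ n, homogeneousComponent n p = 0 := fun n => by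
    refine eq_zero_of_isHomogeneous_of_hasSolePole (homogeneousComponent_isHomogeneous n p)
      (fun e he => hstar e ?_) fun i hi => ?_
    · rw [support_homogeneousComponent] at he
      exact (Finset.mem_filter.1 he).1
    · obtain ⟨w, hw, hwI⟩ := hcurve i hi
      exact ⟨w, hw, hwI _ (homogeneousComponent_mem_of_mem hI hpI n)⟩
  rw [← sum_homogeneousComponent p]
  exact Finset.sum_eq_zero fun n _ => hcomp n

end SolePole

section StanleyReisner

theorem SComplex.srIdeal_eq_span_image {n : ℕ} (K : Type*) [Field K] {Δ : SComplex n}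
    {N : Set (Finset (Fin (n + 1)))} (hN : ∀ t ∈ N, t ∉ Δ.faces)
    (hmin : ∀ s, s ∉ Δ.faces → ∃ t ∈ N, t ⊆ s) :
    Δ.srIdeal K = Ideal.span ((fun t => ∏ i ∈ t, X i) '' N) := by
  apply le_antisymm
  · rw [srIdeal, Ideal.span_le]
    rintro _ ⟨s, hs, rfl⟩
    obtain ⟨t, htN, hts⟩ := hmin s hs
    exact Ideal.mem_of_dvd _ (Finset.prod_dvd_prod_of_subset t s _ hts)
      (Ideal.subset_span ⟨t, htN, rfl⟩)
  · refine Ideal.span_mono ?_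
    rintro _ ⟨t, htN, rfl⟩
    exact ⟨t, hN t htN, rfl⟩

theorem starTree_srIdeal (K : Type*) [Field K] :
    starTree.srIdeal K = Ideal.span {X 0 * X 1, X 0 * X 2, X 1 * X 2} := by
  have hnonface : ∀ t : Finset (Fin 4), t ∈ ({{0, 1}, {0, 2}, {1, 2}} : Finset (Finset (Fin 4))) →
      ¬ (t ⊆ {0, 3} ∨ t ⊆ {1, 3} ∨ t ⊆ {2, 3}) := by decide
  have hmin : ∀ s : Finset (Fin 4), ¬ (s ⊆ {0, 3} ∨ s ⊆ {1, 3} ∨ s ⊆ {2, 3}) →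
      ∃ t ∈ ({{0, 1}, {0, 2}, {1, 2}} : Finset (Finset (Fin 4))), t ⊆ s := by decide
  rw [SComplex.srIdeal_eq_span_image K hnonface hmin]
  simp [Set.image_insert_eq]

end StanleyReisner

section LeadingExponent

open scoped MonomialOrder

variable {σ R : Type*} [CommSemiring R] [Nontrivial R] {m : MonomialOrder σ} {i j : σ}

theorem X_mul_X_eq_monomial (R : Type*) [CommSemiring R] (i j : σ) :
    (X i * X j : MvPolynomial σ R) = monomial (Finsupp.single i 1 + Finsupp.single j 1) 1 := by
  simp [X, monomial_mul]

theorem degree_X_mul_X (R : Type*) [CommSemiring R] [Nontrivial R] (m : MonomialOrder σ) (i j : σ) :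
    m.degree (X i * X j : MvPolynomial σ R) = Finsupp.single i 1 + Finsupp.single j 1 := by
  classical
  rw [X_mul_X_eq_monomial, m.degree_monomial, if_neg one_ne_zero]

theorem degree_X_mul_X_add_of_lt {q : MvPolynomial σ R}
    (hq : m.degree q ≺[m] Finsupp.single i 1 + Finsupp.single j 1) :
    m.degree (X i * X j + q) = Finsupp.single i 1 + Finsupp.single j 1 := by
  rw [m.degree_add_of_lt (by rwa [degree_X_mul_X]), degree_X_mul_X]

theorem single_add_single_le_iff (hij : i ≠ j) {e : σ →₀ ℕ} :
    Finsupp.single i 1 + Finsupp.single j 1 ≤ e ↔ e i ≠ 0 ∧ e j ≠ 0 := by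
  classical
  refine ⟨fun h => ⟨?_, ?_⟩, fun h k => ?_⟩
  · simpa [hij, Nat.one_le_iff_ne_zero] using h i
  · simpa [hij.symm, Nat.one_le_iff_ne_zero] using h j
  · simp only [Finsupp.add_apply, Finsupp.single_apply]
    grind

end LeadingExponent

section StarExample

open scoped MonomialOrder Polynomial

attribute [local instance] MvPolynomial.gradedAlgebra

/-- The reduced Gröbner basis of the ideal of minors, for any monomial order in which `X_3` is the
smallest variable. Each element is written with its leading monomial first. -/
noncomputable def starBasis (R : Type*) [CommRing R] : Fin 3 → MvPolynomial (Fin 4) R :=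
  ![X 0 * X 1 + (X 0 * X 3 + X 1 * X 3), X 0 * X 2 + X 3 * X 3,
    X 1 * X 2 + -(X 1 * X 3 + X 3 * X 3)]

/-- The exponents of the monomials `X_0X_1`, `X_0X_2`, `X_1X_2` that generate the initial ideal. -/
noncomputable def starExponent : Fin 3 → Fin 4 →₀ ℕ :=
  ![Finsupp.single 0 1 + Finsupp.single 1 1, Finsupp.single 0 1 + Finsupp.single 2 1,
    Finsupp.single 1 1 + Finsupp.single 2 1]

/-- Three parametrizations of the twisted cubic cut out by the minors. The `i`-th one sends the
parameter value `∞` to the `i`-th coordinate point. -/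
noncomputable def twistedCubicChart (R : Type*) [CommRing R] : Fin 3 → Fin 4 → R[X] :=
  let t : R[X] := Polynomial.X
  ![![t ^ 2 * (t + 1), -t ^ 2, -(t + 1), t * (t + 1)],
    ![-(t - 1) ^ 2, t * (t - 1) ^ 2, t ^ 2, t * (t - 1)],
    ![-(t - 1), t, t ^ 2 * (t - 1), t * (t - 1)]]

theorem span_minors_eq_span_starBasis (R : Type*) [CommRing R] :
    Ideal.span
      {(X 1 + X 2 + X 3) * (X 1) - (X 1 + X 3) * (X 1 + X 3),
       (X 1 + X 2 + X 3) * (X 0 + X 1) - (X 1 + X 3) * (X 1),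
       (X 1 + X 3) * (X 0 + X 1) - (X 1) * (X 1)} =
      Ideal.span (Set.range (starBasis R)) := by
  have hrange : Set.range (starBasis R) = {starBasis R 0, starBasis R 1, starBasis R 2} := by
    ext; simp [Fin.exists_fin_succ, eq_comm]
  have h01 : (X 1 + X 2 + X 3) * X 1 - (X 1 + X 3) * (X 1 + X 3) = starBasis R 2 := by
    simp only [starBasis, Matrix.cons_val]
    ring
  have h02 : (X 1 + X 2 + X 3) * (X 0 + X 1) - (X 1 + X 3) * X 1 =
      starBasis R 0 + starBasis R 1 + starBasis R 2 := by
    simp only [starBasis, Matrix.cons_val]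
    ring
  have h12 : (X 1 + X 3) * (X 0 + X 1) - X 1 * X 1 = starBasis R 0 := by
    simp only [starBasis, Matrix.cons_val]
    ring
  rw [hrange, h01, h02, h12]
  apply le_antisymm <;> rw [Ideal.span_le]
  · have hmem : ∀ k, starBasis R k ∈ Ideal.span {starBasis R 0, starBasis R 1, starBasis R 2} :=
      fun k => hrange ▸ Ideal.subset_span (Set.mem_range_self k)
    rintro _ (rfl | rfl | rfl)
    exacts [hmem 2, add_mem (add_mem (hmem 0) (hmem 1)) (hmem 2), hmem 0]
  · set I := Ideal.span {starBasis R 2, starBasis R 0 + starBasis R 1 + starBasis R 2,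
      starBasis R 0}
    have h0 : starBasis R 0 ∈ I := Ideal.subset_span (by simp)
    have h2 : starBasis R 2 ∈ I := Ideal.subset_span (by simp)
    have hsum : starBasis R 0 + starBasis R 1 + starBasis R 2 ∈ I := Ideal.subset_span (by simp)
    have h1 : starBasis R 1 ∈ I :=
      (I.add_mem_iff_right h0).1 ((I.add_mem_iff_left h2).1 hsum)
    rintro _ (rfl | rfl | rfl)
    exacts [h0, h1, h2]

theorem hasSolePole_twistedCubicChart (R : Type*) [CommRing R] [Nontrivial R] (k : Fin 3) :
    HasSolePole (twistedCubicChart R k) 3 k.castSucc := by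
  have hdeg : ∀ j, (twistedCubicChart R k j).natDegree =
      (![![3, 2, 1, 2], ![2, 3, 2, 2], ![1, 1, 3, 2]] : Fin 3 → Fin 4 → ℕ) k j := by
    fin_cases k <;> intro j <;> fin_cases j <;>
      simp only [twistedCubicChart, Fin.reduceFinMk, Matrix.cons_val, Polynomial.natDegree_neg] <;>
      compute_degree!
  refine ⟨fun j hj => ?_, ?_, fun j hj => ?_⟩
  · have h := hdeg j
    rw [hj, Polynomial.natDegree_zero] at h
    clear hdeg hj
    revert j k
    decide
  · rw [hdeg, hdeg]
    clear hdeg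
    revert k
    decide
  · rw [hdeg, hdeg]
    clear hdeg
    revert j k
    decide

theorem aeval_twistedCubicChart_starBasis {R : Type*} [CommRing R] (k l : Fin 3) :
    aeval (twistedCubicChart R k) (starBasis R l) = 0 := by
  fin_cases k <;> fin_cases l <;> simp [twistedCubicChart, starBasis] <;> ring

theorem isHomogeneous_starBasis (R : Type*) [CommRing R] (k : Fin 3) :
    (starBasis R k).IsHomogeneous 2 := by
  have hXX : ∀ i j : Fin 4, (X i * X j : MvPolynomial (Fin 4) R).IsHomogeneous 2 := fun i j =>
    (isHomogeneous_X R i).mul (isHomogeneous_X R j)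
  fin_cases k
  · exact (hXX 0 1).add ((hXX 0 3).add (hXX 1 3))
  · exact (hXX 0 2).add (hXX 3 3)
  · exact (hXX 1 2).add ((hXX 1 3).add (hXX 3 3)).neg

theorem starExponent_ne_zero (k : Fin 3) : starExponent k ≠ 0 := by
  fin_cases k <;> simp [starExponent]

theorem range_monomial_starExponent (R : Type*) [CommSemiring R] :
    Set.range (fun k => monomial (starExponent k) (1 : R)) =
      {X 0 * X 1, X 0 * X 2, X 1 * X 2} := by
  ext
  simp [Fin.exists_fin_succ, starExponent, X_mul_X_eq_monomial, eq_comm]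

theorem isStarSupported_of_forall_not_starExponent_le {e : Fin 4 →₀ ℕ}
    (he : ∀ k, ¬ starExponent k ≤ e) : IsStarSupported 3 e := by
  have h01 : ¬ (e 0 ≠ 0 ∧ e 1 ≠ 0) := (single_add_single_le_iff (by decide)).not.1 (he 0)
  have h02 : ¬ (e 0 ≠ 0 ∧ e 2 ≠ 0) := (single_add_single_le_iff (by decide)).not.1 (he 1)
  have h12 : ¬ (e 1 ≠ 0 ∧ e 2 ≠ 0) := (single_add_single_le_iff (by decide)).not.1 (he 2)
  rintro i ⟨hi, hi3⟩ j ⟨hj, hj3⟩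
  rw [Finset.mem_coe, Finsupp.mem_support_iff] at hi hj
  fin_cases i <;> fin_cases j <;> simp_all

theorem degree_starBasis {R : Type*} [CommRing R] [Nontrivial R] {m : MonomialOrder (Fin 4)}
    (hm : ∀ i, i ≠ 3 → Finsupp.single 3 1 ≺[m] Finsupp.single i 1) (k : Fin 3) :
    m.degree (starBasis R k) = starExponent k := by
  have hadd : ∀ {p q : MvPolynomial (Fin 4) R} {d}, m.degree p ≺[m] d → m.degree q ≺[m] d →
      m.degree (p + q) ≺[m] d := fun hp hq => m.degree_add_le.trans_lt (max_lt hp hq)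
  have h0 := hm 0 (by decide)
  have h1 := hm 1 (by decide)
  have h2 := hm 2 (by decide)
  fin_cases k
  · refine degree_X_mul_X_add_of_lt (hadd ?_ ?_) <;> simp only [degree_X_mul_X, map_add]
    · gcongr
    · rw [add_comm]
      gcongr
  · apply degree_X_mul_X_add_of_lt
    simp only [degree_X_mul_X, map_add]
    gcongr
  · apply degree_X_mul_X_add_of_lt
    rw [m.degree_neg]
    refine hadd ?_ ?_ <;> simp only [degree_X_mul_X, map_add] <;> gcongr

theorem eq_zero_of_mem_span_starBasis {R : Type*} [CommRing R] [IsDomain R]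
    {p : MvPolynomial (Fin 4) R} (hp : p ∈ Ideal.span (Set.range (starBasis R)))
    (hstar : ∀ e ∈ p.support, IsStarSupported 3 e) : p = 0 := by
  refine eq_zero_of_mem_of_hasSolePole (Ideal.homogeneous_span _ _ ?_) (fun i hi => ?_) hp hstar
  · rintro _ ⟨k, rfl⟩
    exact ⟨2, isHomogeneous_starBasis R k⟩
  · obtain ⟨k, rfl⟩ := Fin.exists_castSucc_eq.2 hi
    refine ⟨_, hasSolePole_twistedCubicChart R k, ?_⟩
    change Ideal.span _ ≤ RingHom.ker (aeval (twistedCubicChart R k))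
    rw [Ideal.span_le]
    rintro _ ⟨l, rfl⟩
    exact aeval_twistedCubicChart_starBasis k l

theorem initialIdeal_star_example_general {K : Type*} [Field K]
    (J : Ideal (MvPolynomial (Fin 4) K))
    (hJ : J = Ideal.span
      {(X 1 + X 2 + X 3) * (X 1) - (X 1 + X 3) * (X 1 + X 3),
       (X 1 + X 2 + X 3) * (X 0 + X 1) - (X 1 + X 3) * (X 1),
       (X 1 + X 3) * (X 0 + X 1) - (X 1) * (X 1)})
    (m : MonomialOrder (Fin 4)) (hm : ∀ i, i ≠ 3 → Finsupp.single 3 1 ≺[m] Finsupp.single i 1) :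
    initialIdeal m J = Ideal.span {X 0 * X 1, X 0 * X 2, X 1 * X 2} ∧
      initialIdeal m J = starTree.srIdeal K := by
  rw [starTree_srIdeal, and_self, hJ, span_minors_eq_span_starBasis]
  have hdeg := degree_starBasis (R := K) hm
  rw [initialIdeal_eq_span_monomial_degree (fun k => Ideal.subset_span (Set.mem_range_self k))
    (fun k => m.ne_zero_of_degree_ne_zero (hdeg k ▸ starExponent_ne_zero k)) ?_]
  · simp only [hdeg, range_monomial_starExponent]
  · simp only [hdeg]
    intro p hp hstd
    exact eq_zero_of_mem_span_starBasis hp fun e he =>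
      isStarSupported_of_forall_not_starExponent_le (hstd e he)

end StarExample

/-- **Statement 14.** Over any field `K`, let `J ⊆ K[X_0, X_1, X_2, X_3]` be the ideal of
`2 × 2` minors of the matrix with rows `(X_1+X_2+X_3, X_1+X_3, X_1)` and
`(X_1+X_3, X_1, X_0+X_1)`. For every monomial order with `X_0 > X_1 > X_2 > X_3`, the initial
ideal of `J` is `(X_0X_1, X_0X_2, X_1X_2)`, i.e. the Stanley–Reisner ideal of the tree on
`{0,1,2,3}` with edges `{0,3}`, `{1,3}`, `{2,3}`. -/
theorem initialIdeal_star_example {K : Type*} [Field K]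
    (J : Ideal (MvPolynomial (Fin 4) K))
    (hJ : J = Ideal.span
      {(X 1 + X 2 + X 3) * (X 1) - (X 1 + X 3) * (X 1 + X 3),
       (X 1 + X 2 + X 3) * (X 0 + X 1) - (X 1 + X 3) * (X 1),
       (X 1 + X 3) * (X 0 + X 1) - (X 1) * (X 1)})
    (m : MonomialOrder (Fin 4)) (hm : m.Descending) :
    initialIdeal m J = Ideal.span {X 0 * X 1, X 0 * X 2, X 1 * X 2} ∧
      initialIdeal m J = starTree.srIdeal K := by
  exact initialIdeal_star_example_general J hJ m fun i hi => hm i 3 (Fin.lt_last_iff_ne_last.2 hi)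
end
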